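/- Suppose γ > 0 and β < 0. Then for every Floquet exponent ξ ∈ (0, 1/2] there exists k > 0 such that ω(−1+ξ) = ω(1+ξ), where c₀ = γ/k² + βk² and ω(x) = k²·x·(c₀ − βk²x²) − γ/x. -/

import Mathlib

/-- Dispersion function of the linearized Ostrovsky equation,
with `c₀ = γ/k² + βk²` built in. -/
noncomputable def omega (γ β k x : ℝ) : ℝ :=
  k^2 * x * ((γ/k^2 + β*k^2) - β*k^2*x^2) - γ/x

lemma omega_eq {γ β k x : ℝ} (hk : k ≠ 0) :
    omega γ β k x = γ * x + β * k ^ 4 * (x - x ^ 3) - γ / x := by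
  unfold omega
  field_simp
  ring

theorem m11_collision_neg_beta (γ β : ℝ) (hγ : 0 < γ) (hβ : β < 0) :
    ∀ ξ : ℝ, 0 < ξ → ξ ≤ 1/2 →
      ∃ k : ℝ, 0 < k ∧ omega γ β k (-1 + ξ) = omega γ β k (1 + ξ) := by
  intro ξ hξ hξ'
  have hsq : ξ ^ 2 - 1 < 0 := by nlinarith
  have hpos : 0 < γ / (3 * β * (ξ ^ 2 - 1)) :=
    div_pos hγ (mul_pos_of_neg_of_neg (by linarith) hsq)
  obtain ⟨k, hk, hk4⟩ : ∃ k : ℝ, 0 < k ∧ k ^ 4 = γ / (3 * β * (ξ ^ 2 - 1)) :=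
    ⟨_, Real.rpow_pos_of_pos hpos _, Real.rpow_inv_natCast_pow hpos.le four_ne_zero⟩
  refine ⟨k, hk, ?_⟩
  rw [omega_eq hk.ne', omega_eq hk.ne', hk4]
  have hβ₀ : β ≠ 0 := hβ.ne
  have h₁ : -1 + ξ ≠ 0 := by linarith
  have h₂ : 1 + ξ ≠ 0 := by linarith
  have h₃ : ξ ^ 2 - 1 = (-1 + ξ) * (1 + ξ) := by ring
  rw [h₃]
  field_simp
  ring
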